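/- Assume in addition that B(H,H) > 0 and that B is negative semidefinite on the orthogonal complement of H, i.e. B(v,v) ≤ 0 whenever B(H,v) = 0 (the Hodge index property). Then for every D ∈ V one has B(H,H)·Δ_{H,D} ≥ Δ, and there exists D ∈ V (for instance any D whose H-orthogonal component equals ε/r, where c₁ = e·H + ε with B(H,ε) = 0) for which B(H,H)·Δ_{H,D} = Δ. -/

import Mathlib

/-!
Twisting by `D` multiplies the Chern character by `exp (-D)` and leaves the discriminant
`ch₁² / (2r²) - ch₂ / r` unchanged, whereas `H² Δ_{H,D}` is the same expression with `(ch₁ᴰ)²`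
replaced by the square of its projection to the line through `H`. The two therefore differ by
`-ε² / (2r²)`, where `ε` is the component of `ch₁ᴰ` orthogonal to `H`: this is nonnegative by the
Hodge index property, and vanishes as soon as `D` absorbs the orthogonal component of `ch₁ / r`.
-/

section OrthogonalComponent

variable {K V : Type*} [Field K] [AddCommGroup V] [Module K V]

/-- The component of a vector in the orthogonal complement of `H`, along the line spanned by `H`.
It has this meaning only when `B H H ≠ 0`. -/
def orthogonalComponent (B : LinearMap.BilinForm K V) (H : V) : V →ₗ[K] V :=
  LinearMap.id - ((B H H)⁻¹ • B H).smulRight H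

variable {B : LinearMap.BilinForm K V} {H : V}

lemma orthogonalComponent_apply (v : V) :
    orthogonalComponent B H v = v - (B H v / B H H) • H := by
  simp [orthogonalComponent, div_eq_inv_mul]

lemma apply_orthogonalComponent_eq_zero (hH : B H H ≠ 0) (v : V) :
    B H (orthogonalComponent B H v) = 0 := by
  rw [orthogonalComponent_apply, map_sub, map_smul, smul_eq_mul, div_mul_cancel₀ _ hH, sub_self]

lemma apply_orthogonalComponent_self (hB : B.IsSymm) (hH : B H H ≠ 0) (v : V) :
    B (orthogonalComponent B H v) (orthogonalComponent B H v) = B v v - B H v ^ 2 / B H H := by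
  set ε := orthogonalComponent B H v with hε
  have hεH : B ε H = 0 := by rw [hB.eq, apply_orthogonalComponent_eq_zero hH]
  calc B ε ε = B ε (v - (B H v / B H H) • H) := by rw [← orthogonalComponent_apply]
    _ = B ε v := by rw [map_sub, map_smul, hεH, smul_zero, sub_zero]
    _ = B v v - B H v ^ 2 / B H H := by
      rw [hε, orthogonalComponent_apply, map_sub, map_smul, LinearMap.sub_apply,
        LinearMap.smul_apply, smul_eq_mul]
      ring

end OrthogonalComponent

section Discriminants

variable {K V : Type*} [Field K] [AddCommGroup V] [Module K V]

/-- The first Chern character `ch₁ᴰ` of a class of rank `r` and first Chern class `c₁`, twisted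
by the divisor `D`. -/
def twistedCh₁ (r : K) (c₁ D : V) : V := c₁ - r • D

/-- The second Chern character `ch₂ᴰ` of a class with Chern character `(r, c₁, c₂)`, twisted by
the divisor `D`; here `c₂` stands for `ch₂` rather than for the second Chern class. -/
def twistedCh₂ (B : LinearMap.BilinForm K V) (r : K) (c₁ : V) (c₂ : K) (D : V) : K :=
  c₂ - B D c₁ + (r / 2) * B D D

/-- The discriminant `Δ` of a class with Chern character `(r, c₁, c₂)`, normalised by the square
of the rank. -/
def chernDiscriminant (B : LinearMap.BilinForm K V) (r : K) (c₁ : V) (c₂ : K) : K :=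
  B c₁ c₁ / (2 * r ^ 2) - c₂ / r

/-- The slope `μ_H` of a class of rank `r` and first Chern class `c₁`, normalised so that `H`
itself has slope `1 / r`. The twisted slope `μ_{H,D}` is obtained by inserting `twistedCh₁`. -/
def mumfordSlope (B : LinearMap.BilinForm K V) (H : V) (r : K) (c₁ : V) : K :=
  B H c₁ / (r * B H H)

/-- The discriminant `Δ_H`, which sees `c₁` only through its slope. The twisted discriminant
`Δ_{H,D}` is obtained by inserting `twistedCh₁` and `twistedCh₂`. -/
def slopeDiscriminant (B : LinearMap.BilinForm K V) (H : V) (r : K) (c₁ : V) (c₂ : K) : K :=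
  (1 / 2) * mumfordSlope B H r c₁ ^ 2 - c₂ / (r * B H H)

variable {B : LinearMap.BilinForm K V} {H : V} {r : K}

lemma chernDiscriminant_twisted [NeZero (2 : K)] (hB : B.IsSymm) (hr : r ≠ 0)
    (c₁ : V) (c₂ : K) (D : V) :
    chernDiscriminant B r (twistedCh₁ r c₁ D) (twistedCh₂ B r c₁ c₂ D) =
      chernDiscriminant B r c₁ c₂ := by
  have sq_twistedCh₁ : B (twistedCh₁ r c₁ D) (twistedCh₁ r c₁ D) =
      B c₁ c₁ - 2 * r * B D c₁ + r ^ 2 * B D D := by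
    simp only [twistedCh₁, map_sub, map_smul, LinearMap.sub_apply, LinearMap.smul_apply,
      smul_eq_mul, hB.eq c₁ D]
    ring
  rw [chernDiscriminant, chernDiscriminant, sq_twistedCh₁, twistedCh₂]
  have h2 : (2 : K) ≠ 0 := two_ne_zero
  field_simp
  ring

lemma apply_self_mul_slopeDiscriminant (hB : B.IsSymm) (hH : B H H ≠ 0) (c₁ : V) (c₂ : K) :
    B H H * slopeDiscriminant B H r c₁ c₂ =
      chernDiscriminant B r c₁ c₂ -
        B (orthogonalComponent B H c₁) (orthogonalComponent B H c₁) / (2 * r ^ 2) := by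
  rw [apply_orthogonalComponent_self hB hH, slopeDiscriminant, mumfordSlope, chernDiscriminant]
  field_simp
  ring

lemma apply_self_mul_slopeDiscriminant_of_orthogonalComponent_eq_zero (hB : B.IsSymm)
    (hH : B H H ≠ 0) {c₁ : V} (hc₁ : orthogonalComponent B H c₁ = 0) (c₂ : K) :
    B H H * slopeDiscriminant B H r c₁ c₂ = chernDiscriminant B r c₁ c₂ := by
  rw [apply_self_mul_slopeDiscriminant hB hH, hc₁, map_zero, zero_div, sub_zero]

lemma chernDiscriminant_le_apply_self_mul_slopeDiscriminant [LinearOrder K]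
    [IsStrictOrderedRing K] (hB : B.IsSymm) (hH : B H H ≠ 0)
    (hodge : ∀ v, B H v = 0 → B v v ≤ 0) (c₁ : V) (c₂ : K) :
    chernDiscriminant B r c₁ c₂ ≤ B H H * slopeDiscriminant B H r c₁ c₂ := by
  have sq_nonpos := hodge _ (apply_orthogonalComponent_eq_zero hH c₁)
  rw [apply_self_mul_slopeDiscriminant hB hH]
  exact le_sub_self_iff _ |>.2 (div_nonpos_of_nonpos_of_nonneg sq_nonpos (by positivity))

end Discriminants

theorem stmt_1_general {K V : Type*} [Field K] [LinearOrder K] [IsStrictOrderedRing K]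
    [AddCommGroup V] [Module K V] {B : LinearMap.BilinForm K V} (hB : B.IsSymm)
    {H : V} (hH : B H H ≠ 0) (hodge : ∀ v, B H v = 0 → B v v ≤ 0)
    {r : K} (hr : r ≠ 0) (c₁ : V) (c₂ : K) :
    (∀ D, chernDiscriminant B r c₁ c₂ ≤
      B H H * slopeDiscriminant B H r (twistedCh₁ r c₁ D) (twistedCh₂ B r c₁ c₂ D)) ∧
    ∀ D, orthogonalComponent B H D = r⁻¹ • orthogonalComponent B H c₁ →
      B H H * slopeDiscriminant B H r (twistedCh₁ r c₁ D) (twistedCh₂ B r c₁ c₂ D) =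
        chernDiscriminant B r c₁ c₂ := by
  refine ⟨fun D ↦ ?_, fun D hD ↦ ?_⟩ <;> rw [← chernDiscriminant_twisted hB hr c₁ c₂ D]
  · exact chernDiscriminant_le_apply_self_mul_slopeDiscriminant hB hH hodge _ _
  · have twistedCh₁_parallel : orthogonalComponent B H (twistedCh₁ r c₁ D) = 0 := by
      rw [twistedCh₁, map_sub, map_smul, hD, smul_inv_smul₀ hr, sub_self]
    exact apply_self_mul_slopeDiscriminant_of_orthogonalComponent_eq_zero hB hH
      twistedCh₁_parallel _

/-- If B(H,H) > 0 and B is negative semidefinite on H-perp (Hodge index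
property), then B(H,H)·Δ_{H,D} ≥ Δ for every D, and equality holds for some D. -/
theorem stmt_1 (V : Type*) [AddCommGroup V] [Module ℝ V]
    (B : V →ₗ[ℝ] V →ₗ[ℝ] ℝ) (hsymm : ∀ v w : V, B v w = B w v)
    (H : V) (hHpos : B H H > 0)
    (hodge : ∀ v : V, B H v = 0 → B v v ≤ 0)
    (r : ℝ) (hr : r ≠ 0) (c₁ : V) (c₂ : ℝ) :
    (∀ D : V,
      B H H * ((1/2) * (B H (c₁ - r • D) / (r * B H H))^2
          - (c₂ - B D c₁ + (r/2) * B D D) / (r * B H H))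
        ≥ B c₁ c₁ / (2 * r^2) - c₂ / r) ∧
    (∃ D : V,
      B H H * ((1/2) * (B H (c₁ - r • D) / (r * B H H))^2
          - (c₂ - B D c₁ + (r/2) * B D D) / (r * B H H))
        = B c₁ c₁ / (2 * r^2) - c₂ / r) := by
  have h := stmt_1_general (B := B) ⟨hsymm⟩ hHpos.ne' hodge hr c₁ c₂
  exact ⟨h.1, r⁻¹ • c₁, h.2 _ (map_smul _ _ _)⟩
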